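/- Let n ≥ 3, let A be a real n×n matrix that is symmetric, has nonpositive off-diagonal entries, is irreducible, and satisfies A·𝟙 = 0, and let f ∈ ℝⁿ. Let i, j, k be three indices, and let u, v, w ∈ ℝⁿ satisfy A u = fᵢ with u(i) = 0, A v = f_j with v(j) = 0, and A w = f_k with w(k) = 0. Then u(j) + v(k) + w(i) = v(i) + w(j) + u(k). -/

import Mathlib

/-!
Write `s = ∑ l, f l`, so that `A u = f - s eᵢ`, `A v = f - s eⱼ`, `A w = f - s eₖ`.

Symmetry of `A` gives `v · A u = u · A v`, that is, `v · f - u · f = s (v i - u j)`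
(`reciprocity`). Adding the three cyclic versions of this relation makes the left-hand sides
cancel and leaves `s` times the claimed identity, which settles the case `s ≠ 0`.

If `s = 0`, then `u`, `v`, `w` all solve `A x = f`. By the maximum principle the kernel of `A`
consists of constant vectors (`eq_of_mulVec_eq_zero`), so the three solutions differ by constants,
and the identity is immediate.
-/

/-- Maximum principle: if `A x = 0`, the set where `x` attains its maximum is joined to its
complement by no nonzero entry of `A`, so by irreducibility it is everything. -/
lemma eq_of_mulVec_eq_zero {n : ℕ} (A : Matrix (Fin n) (Fin n) ℝ)
    (hoff : ∀ i j : Fin n, i ≠ j → A i j ≤ 0)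
    (hirr : ∀ S : Finset (Fin n), S.Nonempty → S ≠ Finset.univ →
      ∃ i ∈ S, ∃ j ∉ S, A i j ≠ 0)
    (hone : A.mulVec (fun _ => (1 : ℝ)) = 0)
    (x : Fin n → ℝ) (hx : A.mulVec x = 0) (a b : Fin n) : x a = x b := by
  obtain ⟨p, -, hp⟩ := Finset.exists_max_image Finset.univ x ⟨a, Finset.mem_univ a⟩
  suffices h : Finset.univ.filter (fun l => x l = x p) = Finset.univ by
    have h' := fun l => (Finset.mem_filter.1 (h ▸ Finset.mem_univ l)).2
    rw [h' a, h' b]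
  by_contra hS
  obtain ⟨q, hq, r, hr, hqr⟩ := hirr _ ⟨p, by simp⟩ hS
  have hq : x q = x p := by simpa using hq
  have hr : x r ≠ x p := by simpa using hr
  have h1 : ∑ l, A q l = 0 := by
    simpa [Matrix.mulVec, dotProduct] using congrFun hone q
  have h2 : ∑ l, A q l * x l = 0 := by
    simpa [Matrix.mulVec, dotProduct] using congrFun hx q
  have h3 : ∑ l, A q l * (x l - x p) = 0 := by
    simp only [mul_sub, Finset.sum_sub_distrib, ← Finset.sum_mul, h1, h2]
    ring
  have h4 : ∀ l ∈ Finset.univ, 0 ≤ A q l * (x l - x p) := by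
    intro l hl
    by_cases hql : q = l
    · subst hql
      simp [hq]
    · exact mul_nonneg_of_nonpos_of_nonpos (hoff q l hql) (sub_nonpos.2 (hp l hl))
  have h5 := (Finset.sum_eq_zero_iff_of_nonneg h4).1 h3 r (Finset.mem_univ r)
  exact mul_ne_zero hqr (sub_ne_zero.2 hr) h5

lemma update_sub_eq {n : ℕ} (f : Fin n → ℝ) (i : Fin n) (s : ℝ) :
    Function.update f i (f i - s) = f - Pi.single i s := by
  ext l
  by_cases h : l = i
  · subst h
    simp
  · simp [h]

/-- The relation `v · A u = u · A v`, evaluated for `A u = f - s eᵢ` and `A v = f - s eⱼ`. -/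
lemma reciprocity {n : ℕ} (A : Matrix (Fin n) (Fin n) ℝ) (hsym : A.IsSymm)
    (f u v : Fin n → ℝ) (i j : Fin n) (s : ℝ)
    (hu : A.mulVec u = f - Pi.single i s) (hv : A.mulVec v = f - Pi.single j s) :
    v ⬝ᵥ f - u ⬝ᵥ f = s * (v i - u j) := by
  have h : v ⬝ᵥ A.mulVec u = u ⬝ᵥ A.mulVec v := by
    rw [Matrix.dotProduct_mulVec, ← Matrix.mulVec_transpose, hsym.eq, dotProduct_comm]
  rw [hu, hv, dotProduct_sub, dotProduct_sub, dotProduct_single, dotProduct_single] at h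
  linarith


/-- The Coppersmith–Tetali–Winkler identity
`x_{i j} + x_{j k} + x_{k i} = x_{j i} + x_{k j} + x_{i k}` for the solutions of
`A x = fᵢ` with `x i = 0`, for a symmetric, irreducible real `n × n` matrix
(`n ≥ 3`) with nonpositive off-diagonal entries and `A·𝟙 = 0`. -/
theorem stmt_4 (n : ℕ) (hn : 3 ≤ n) (A : Matrix (Fin n) (Fin n) ℝ)
    (hsym : A.IsSymm)
    (hoff : ∀ i j : Fin n, i ≠ j → A i j ≤ 0)
    (hirr : ∀ S : Finset (Fin n), S.Nonempty → S ≠ Finset.univ →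
      ∃ i ∈ S, ∃ j ∉ S, A i j ≠ 0)
    (hone : A.mulVec (fun _ => (1 : ℝ)) = 0)
    (f : Fin n → ℝ) (i j k : Fin n) (u v w : Fin n → ℝ)
    (hu : A.mulVec u = Function.update f i (f i - ∑ l, f l)) (hui : u i = 0)
    (hv : A.mulVec v = Function.update f j (f j - ∑ l, f l)) (hvj : v j = 0)
    (hw : A.mulVec w = Function.update f k (f k - ∑ l, f l)) (hwk : w k = 0) :
    u j + v k + w i = v i + w j + u k := by
  rw [update_sub_eq] at hu hv hw
  set s := ∑ l, f l
  by_cases hs : s = 0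
  · simp only [hs, Pi.single_zero, sub_zero] at hu hv hw
    have huv := eq_of_mulVec_eq_zero A hoff hirr hone (u - v)
      (by rw [Matrix.mulVec_sub, hu, hv, sub_self])
    have hwv := eq_of_mulVec_eq_zero A hoff hirr hone (w - v)
      (by rw [Matrix.mulVec_sub, hw, hv, sub_self])
    have h1 := huv j k
    have h2 := hwv i j
    simp only [Pi.sub_apply] at h1 h2
    linarith
  · have h1 := reciprocity A hsym f u v i j s hu hv
    have h2 := reciprocity A hsym f v w j k s hv hw
    have h3 := reciprocity A hsym f w u k i s hw hu
    apply mul_left_cancel₀ hs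
    linarith
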